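/- Let (T, [···]) be a null symplectic triple system over a field k of characteristic ≠ 2 and let V be a two-dimensional k-vector space with a nonzero alternating bilinear form ⟨·|·⟩. Then g(T) = inder(T) ⊕ (V ⊗ T), with the bracket given by: inder(T) is a subalgebra with the commutator bracket, [d, v⊗x] = v⊗d(x) for d ∈ inder(T), v ∈ V, x ∈ T, and [u⊗x, v⊗y] = ⟨u|v⟩d_{x,y} for u,v ∈ V, x,y ∈ T, is a Lie algebra. Moreover, g(T) is a simple Lie algebra if and only if T is a simple null symplectic triple system. -/

import Mathlib

open scoped TensorProduct

/-- A null symplectic triple system: a trilinear product which is symmetric in its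
arguments and such that the maps `d_{x,y} = [xy·]` are derivations of the product. -/
def IsNullSTS (k : Type*) {T : Type*} [Field k] [AddCommGroup T] [Module k T]
    (tp : T →ₗ[k] T →ₗ[k] T →ₗ[k] T) : Prop :=
  (∀ x y z : T, tp x y z = tp y x z) ∧
  (∀ x y z : T, tp x y z = tp x z y) ∧
  (∀ x y u v w : T, tp x y (tp u v w) =
      tp (tp x y u) v w + tp u (tp x y v) w + tp u v (tp x y w))

/-- A null symplectic triple system is simple if `[TTT] ≠ 0` and it has no proper
nonzero ideal, an ideal being a subspace `I` with `[TTI] ⊆ I`. -/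
def IsSimpleNullSTS (k : Type*) {T : Type*} [Field k] [AddCommGroup T] [Module k T]
    (tp : T →ₗ[k] T →ₗ[k] T →ₗ[k] T) : Prop :=
  (∃ x y z : T, tp x y z ≠ 0) ∧
  ∀ I : Submodule k T, (∀ x y z : T, z ∈ I → tp x y z ∈ I) → I = ⊥ ∨ I = ⊤

/-- `inder(T)`: the linear span of the maps `d_{x,y} = [xy·]`. -/
def inderSub (k T : Type*) [Field k] [AddCommGroup T] [Module k T]
    (tp : T →ₗ[k] T →ₗ[k] T →ₗ[k] T) : Submodule k (T →ₗ[k] T) :=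
  Submodule.span k {f : T →ₗ[k] T | ∃ x y : T, f = tp x y}

/-!
The Jacobi identity for three odd elements `u ⊗ x`, `v ⊗ y`, `w ⊗ z` amounts to
`⟨u|v⟩ w + ⟨v|w⟩ u + ⟨w|u⟩ v = 0`, because `[xyz]` is totally symmetric; this cyclic identity holds
since `V` is a plane, and it also forces a nonzero form to be nondegenerate.

An ideal `J` of `T` gives an ideal of `g(T)`, so `T` is simple if `g(T)` is. Conversely, for an
ideal `I` of `g(T)` and `v ∈ V`, the slice `{x | v ⊗ x ∈ I}` is an ideal of `T`. If it is `T` for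
some `v ≠ 0`, then nondegeneracy puts every `d_{x,y}`, and hence everything, into `I`. If the slices
for all `v ≠ 0` vanish, then bracketing an element of `I` twice with pure tensors `u ⊗ x`, `u ⊗ y`
yields a pure tensor in `I`, so the `V ⊗ T`-component of that element is `0`, and then so is its
`inder(T)`-component.
-/

attribute [local instance] LieRing.ofAssociativeRing

section GradedBracket

variable {k L M : Type*} [CommRing k] [LieRing L] [LieAlgebra k L] [AddCommGroup M] [Module k M]
  (ρ : L →ₗ⁅k⁆ Module.End k M) (β : M →ₗ[k] M →ₗ[k] L)

/-- The bracket on `L ⊕ M` of a `ℤ/2`-graded Lie algebra with even part `L` and odd part `M`, where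
`ρ` is the bracket of an even with an odd element and `β` the bracket of two odd elements. -/
def gradedBracket : (L × M) →ₗ[k] (L × M) →ₗ[k] (L × M) :=
  LinearMap.mk₂ k (fun a b => (⁅a.1, b.1⁆ + β a.2 b.2, ρ a.1 b.2 - ρ b.1 a.2))
    (fun _ _ _ => by ext <;> simp <;> abel)
    (fun _ _ _ => by ext <;> simp [smul_sub])
    (fun _ _ _ => by ext <;> simp <;> abel)
    (fun _ _ _ => by ext <;> simp [smul_sub])

theorem gradedBracket_apply (a b : L × M) :
    gradedBracket ρ β a b = (⁅a.1, b.1⁆ + β a.2 b.2, ρ a.1 b.2 - ρ b.1 a.2) :=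
  rfl

variable {β}

theorem gradedBracket_isAlt (hβ : β.IsAlt) : (gradedBracket ρ β).IsAlt := fun a => by
  simp [gradedBracket_apply, hβ a.2]

variable {ρ}

theorem gradedBracket_leibniz (hβ : β.IsAlt)
    (hder : ∀ x m n, ⁅x, β m n⁆ = β (ρ x m) n + β m (ρ x n))
    (hcyc : ∀ m n p, ρ (β m n) p + ρ (β n p) m + ρ (β p m) n = 0) (a b c : L × M) :
    gradedBracket ρ β a (gradedBracket ρ β b c) =
      gradedBracket ρ β (gradedBracket ρ β a b) c +
        gradedBracket ρ β b (gradedBracket ρ β a c) := by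
  obtain ⟨x, m⟩ := a
  obtain ⟨y, n⟩ := b
  obtain ⟨z, p⟩ := c
  simp only [gradedBracket_apply, Prod.mk_add_mk]
  ext
  · have hzβ : ⁅β m n, z⁆ = β n (ρ z m) - β m (ρ z n) := by
      rw [← lie_skew, hder, ← hβ.neg n]
      abel
    simp only [lie_add, add_lie, map_sub, LinearMap.sub_apply, hder, hzβ, leibniz_lie x y z]
    abel
  · have hodd : ρ (β n p) m = -ρ (β m n) p + ρ (β m p) n := by
      rw [← hβ.neg p m, map_neg, LinearMap.neg_apply, ← sub_eq_zero, ← hcyc m n p]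
      abel
    simp only [map_add, map_sub, LieHom.map_lie, LieRing.of_associative_ring_bracket,
      LinearMap.add_apply, LinearMap.sub_apply, Module.End.mul_apply, hodd]
    abel

end GradedBracket

section TensorForm

variable {k V T W : Type*} [CommRing k] [AddCommGroup V] [Module k V] [AddCommGroup T] [Module k T]
  [AddCommGroup W] [Module k W] (B : V →ₗ[k] V →ₗ[k] k) (δ : T →ₗ[k] T →ₗ[k] W)

/-- The bilinear map `(u ⊗ x, v ⊗ y) ↦ ⟨u|v⟩ δ(x, y)` on `V ⊗ T`; for `δ(x, y) = d_{x,y}` it is the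
bracket of two odd elements of `g(T)`. -/
def tensorForm : V ⊗[k] T →ₗ[k] V ⊗[k] T →ₗ[k] W :=
  (TensorProduct.map₂ B δ).compr₂ (TensorProduct.lid k W).toLinearMap

@[simp]
theorem tensorForm_tmul_tmul (u v : V) (x y : T) :
    tensorForm B δ (u ⊗ₜ x) (v ⊗ₜ y) = B u v • δ x y := by
  simp [tensorForm]

variable {B δ} in
theorem tensorForm_isAlt (hB : B.IsAlt) (hδ : ∀ x y, δ x y = δ y x) : (tensorForm B δ).IsAlt := by
  have hskew (m n : V ⊗[k] T) : tensorForm B δ m n = -tensorForm B δ n m := by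
    suffices tensorForm B δ = -(tensorForm B δ).flip from LinearMap.congr_fun₂ this m n
    ext u x v y
    simp [← hB.neg v u, hδ x y]
  intro m
  induction m with
  | zero => simp
  | tmul u x => simp [hB u]
  | add m n hm hn => simp [hm, hn, hskew m n]

variable (T) in
/-- The contraction `V ⊗ T → Hom(V, T)`, sending `v ⊗ x` to `u ↦ ⟨u|v⟩ x`; it reads off the
`T`-components of a tensor without choosing a basis of `V`. The flip makes `u` the left argument of
the form. -/
def formContraction : V ⊗[k] T →ₗ[k] V →ₗ[k] T :=
  dualTensorHom k V T ∘ₗ B.flip.rTensor T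

@[simp]
theorem formContraction_tmul (u v : V) (x : T) : formContraction T B (v ⊗ₜ x) u = B u v • x := by
  simp [formContraction]

theorem formContraction_lTensor (f : T →ₗ[k] T) (m : V ⊗[k] T) (u : V) :
    formContraction T B (f.lTensor V m) u = f (formContraction T B m u) := by
  induction m with
  | zero => simp
  | tmul v x => simp
  | add m n hm hn => simp [hm, hn]

theorem tensorForm_tmul_left (u : V) (x : T) (m : V ⊗[k] T) :
    tensorForm B δ (u ⊗ₜ x) m = δ x (formContraction T B m u) := by
  induction m with
  | zero => simp
  | tmul v y => simp
  | add m n hm hn => simp [hm, hn]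

theorem tensorForm_lTensor_add {f : T →ₗ[k] T} {φ : W →ₗ[k] W}
    (hφ : ∀ x y, φ (δ x y) = δ (f x) y + δ x (f y)) (m n : V ⊗[k] T) :
    φ (tensorForm B δ m n) =
      tensorForm B δ (f.lTensor V m) n + tensorForm B δ m (f.lTensor V n) := by
  suffices (tensorForm B δ).compr₂ φ =
      tensorForm B δ ∘ₗ f.lTensor V + (tensorForm B δ).compl₂ (f.lTensor V) from
    LinearMap.congr_fun₂ this m n
  ext u x v y
  simp [hφ]

theorem cyclic_sum_lTensor_tensorForm_eq_zero
    (hB : ∀ u v w, B u v • w + B v w • u + B w u • v = 0) {τ : W →ₗ[k] T →ₗ[k] T}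
    (hτ : ∀ x y z, τ (δ x y) z = τ (δ y z) x) (m n p : V ⊗[k] T) :
    (τ (tensorForm B δ m n)).lTensor V p + (τ (tensorForm B δ n p)).lTensor V m +
      (τ (tensorForm B δ p m)).lTensor V n = 0 := by
  induction m with
  | zero => simp
  | add m m' hm hm' =>
    simp only [map_add, LinearMap.add_apply, LinearMap.lTensor_add]
    linear_combination (norm := module) hm + hm'
  | tmul u x =>
  induction n with
  | zero => simp
  | add n n' hn hn' =>
    simp only [map_add, LinearMap.add_apply, LinearMap.lTensor_add]
    linear_combination (norm := module) hn + hn'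
  | tmul v y =>
  induction p with
  | zero => simp
  | add p p' hp hp' =>
    simp only [map_add, LinearMap.add_apply, LinearMap.lTensor_add]
    linear_combination (norm := module) hp + hp'
  | tmul w z =>
    simp only [tensorForm_tmul_tmul, map_smul, LinearMap.lTensor_smul, LinearMap.smul_apply,
      LinearMap.lTensor_tmul, ← hτ x y z, hτ z x y, TensorProduct.smul_tmul',
      ← TensorProduct.add_tmul, hB, TensorProduct.zero_tmul]

variable {B}

theorem formContraction_injective [Module.Finite k V] [Module.Projective k V] [Module.Flat k T]
    (hB : B.SeparatingRight) : Function.Injective (formContraction T B) :=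
  (dualTensorHom_bijective).injective.comp <|
    Module.Flat.rTensor_preserves_injective_linearMap _ <|
      LinearMap.ker_eq_bot.1 <| LinearMap.separatingRight_iff_flip_ker_eq_bot.1 hB

end TensorForm

theorem right_eq_zero_of_tmul_eq_zero {k V T : Type*} [Field k] [AddCommGroup V] [Module k V]
    [AddCommGroup T] [Module k T] {v : V} {x : T} (hv : v ≠ 0) (h : v ⊗ₜ[k] x = 0) : x = 0 := by
  obtain ⟨f, hf⟩ : ∃ f : Module.Dual k V, f v ≠ 0 := by
    simpa using mt (Module.forall_dual_apply_eq_zero_iff k v).1 hv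
  simpa [hf] using congrArg (TensorProduct.lid k T ∘ f.rTensor T) h

section SymplecticPlane

variable {k V : Type*} [Field k] [AddCommGroup V] [Module k V] {B : V →ₗ[k] V →ₗ[k] k}

theorem cyclic_sum_smul_eq_zero (hV : Module.finrank k V = 2) (hB : B.IsAlt) (u v w : V) :
    B u v • w + B v w • u + B w u • v = 0 := by
  have : FiniteDimensional k V := Module.finite_of_finrank_eq_succ hV
  let b := Module.finBasisOfFinrankEq k V hV
  rw [← b.sum_repr u, ← b.sum_repr v, ← b.sum_repr w]
  simp only [Fin.sum_univ_two, map_add, map_smul, LinearMap.add_apply, LinearMap.smul_apply,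
    hB.self_eq_zero, ← hB.neg (b 0) (b 1), smul_eq_mul]
  module

/-- For `u` in the radical of `B` the cyclic identity reduces to `B v w • u = 0`. -/
theorem separatingRight_of_cyclic_sum_smul_eq_zero (hB : B.IsAlt) (hne : B ≠ 0)
    (hcyc : ∀ u v w, B u v • w + B v w • u + B w u • v = 0) : B.SeparatingRight := by
  intro u hu
  obtain ⟨v, w, hvw⟩ : ∃ v w, B v w ≠ 0 := by
    simpa [LinearMap.ext_iff₂] using hne
  have hu' : B u v = 0 := by rw [← hB.neg, hu, neg_zero]
  simpa [hu, hu', hvw] using hcyc u v w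

end SymplecticPlane

/-- The inner derivations `d_{x,y} = [xy·]`, as a bilinear map into `inder(T)`. -/
def innerDer {k T : Type*} [Field k] [AddCommGroup T] [Module k T]
    (tp : T →ₗ[k] T →ₗ[k] T →ₗ[k] T) : T →ₗ[k] T →ₗ[k] inderSub k T tp :=
  LinearMap.mk₂ k (fun x y => ⟨tp x y, Submodule.subset_span ⟨x, y, rfl⟩⟩)
    (fun _ _ _ => by ext; simp) (fun _ _ _ => by ext; simp)
    (fun _ _ _ => by ext; simp) (fun _ _ _ => by ext; simp)

section InnerDerivations

variable {k T : Type*} [Field k] [AddCommGroup T] [Module k T] {tp : T →ₗ[k] T →ₗ[k] T →ₗ[k] T}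

@[simp]
theorem coe_innerDer (x y : T) : (innerDer tp x y : T →ₗ[k] T) = tp x y :=
  rfl

theorem inderSub_le_compatibleMaps {J : Submodule k T} (hJ : ∀ x y z : T, z ∈ J → tp x y z ∈ J) :
    inderSub k T tp ≤ J.compatibleMaps J :=
  Submodule.span_le.2 <| by
    rintro _ ⟨x, y, rfl⟩ z hz
    exact hJ x y z hz

theorem inderSub_eq_bot (h₀ : ∀ x y z, tp x y z = 0) : inderSub k T tp = ⊥ :=
  Submodule.span_eq_bot.2 <| by
    rintro _ ⟨x, y, rfl⟩
    exact LinearMap.ext (h₀ x y)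

namespace IsNullSTS

variable (h : IsNullSTS k tp)
include h

theorem swap₁₂ (x y z : T) : tp x y z = tp y x z :=
  h.1 x y z

theorem swap₂₃ (x y z : T) : tp x y z = tp x z y :=
  h.2.1 x y z

theorem innerDer_comm (x y : T) : innerDer tp x y = innerDer tp y x :=
  Subtype.ext <| LinearMap.ext (h.swap₁₂ x y)

theorem derivation_of_mem_inderSub {D : T →ₗ[k] T} (hD : D ∈ inderSub k T tp) (u v w : T) :
    D (tp u v w) = tp (D u) v w + tp u (D v) w + tp u v (D w) := by
  induction hD using Submodule.span_induction with
  | mem f hf =>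
    obtain ⟨x, y, rfl⟩ := hf
    exact h.2.2 x y u v w
  | zero => simp
  | add f g _ _ hf hg =>
    simp only [LinearMap.add_apply, map_add, hf, hg]
    abel
  | smul c f _ hf => simp only [LinearMap.smul_apply, map_smul, hf, smul_add]

theorem lie_tp {D : Module.End k T} (hD : D ∈ inderSub k T tp) (x y : T) :
    ⁅D, (tp x y : Module.End k T)⁆ = tp (D x) y + tp x (D y) := by
  ext z
  simp [LieRing.of_associative_ring_bracket, h.derivation_of_mem_inderSub hD]

theorem lie_mem_inderSub {D E : Module.End k T} (hD : D ∈ inderSub k T tp)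
    (hE : E ∈ inderSub k T tp) : ⁅D, E⁆ ∈ inderSub k T tp := by
  induction hE using Submodule.span_induction with
  | mem f hf =>
    obtain ⟨x, y, rfl⟩ := hf
    rw [h.lie_tp hD]
    exact add_mem (innerDer tp _ _).2 (innerDer tp _ _).2
  | zero => simp
  | add f g _ _ hf hg => simpa only [lie_add] using add_mem hf hg
  | smul c f _ hf => simpa only [lie_smul] using Submodule.smul_mem _ c hf

/-- `inder(T)` as a Lie subalgebra of `gl(T)`. Its coercion to a type is definitionally that of
`inderSub k T tp`, which lets the bracket below live on the latter. -/
def inder : LieSubalgebra k (Module.End k T) where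
  __ := inderSub k T tp
  lie_mem' := h.lie_mem_inderSub

end IsNullSTS

end InnerDerivations

namespace IsNullSTS

section Bracket

variable {k V T : Type*} [Field k] [AddCommGroup V] [Module k V] [AddCommGroup T] [Module k T]
  {tp : T →ₗ[k] T →ₗ[k] T →ₗ[k] T} (h : IsNullSTS k tp) (B : V →ₗ[k] V →ₗ[k] k)

variable (V) in
/-- The representation of `inder(T)` on `V ⊗ T` through the second factor, which is the bracket of
an even with an odd element of `g(T)`. -/
def tensorRep : h.inder →ₗ⁅k⁆ Module.End k (V ⊗[k] T) :=
  (Module.End.lTensorAlgHom k T V).toLieHom.comp h.inder.incl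

/-- The bracket of `g(T) = inder(T) ⊕ (V ⊗ T)`, graded with even part `inder(T)` and odd part
`V ⊗ T`. -/
def bracket : (inderSub k T tp × V ⊗[k] T) →ₗ[k] (inderSub k T tp × V ⊗[k] T) →ₗ[k]
    (inderSub k T tp × V ⊗[k] T) :=
  gradedBracket (h.tensorRep V) (tensorForm B (innerDer tp))

theorem coe_bracket_fst (a b : inderSub k T tp × V ⊗[k] T) :
    ((h.bracket B a b).1 : T →ₗ[k] T) =
      (a.1 : T →ₗ[k] T) ∘ₗ (b.1 : T →ₗ[k] T) - (b.1 : T →ₗ[k] T) ∘ₗ (a.1 : T →ₗ[k] T) +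
        (tensorForm B (innerDer tp) a.2 b.2 : T →ₗ[k] T) :=
  rfl

theorem bracket_snd (a b : inderSub k T tp × V ⊗[k] T) :
    (h.bracket B a b).2 = (a.1 : T →ₗ[k] T).lTensor V b.2 - (b.1 : T →ₗ[k] T).lTensor V a.2 :=
  rfl

theorem bracket_even_odd (D : inderSub k T tp) (m : V ⊗[k] T) :
    h.bracket B (D, 0) (0, m) = (0, (D : T →ₗ[k] T).lTensor V m) :=
  Prod.ext (Subtype.ext (by simp [coe_bracket_fst])) (by simp [bracket_snd])

theorem bracket_odd_even (m : V ⊗[k] T) (D : inderSub k T tp) :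
    h.bracket B (0, m) (D, 0) = (0, -(D : T →ₗ[k] T).lTensor V m) :=
  Prod.ext (Subtype.ext (by simp [coe_bracket_fst])) (by simp [bracket_snd])

theorem bracket_odd_odd (m n : V ⊗[k] T) :
    h.bracket B (0, m) (0, n) = (tensorForm B (innerDer tp) m n, 0) :=
  Prod.ext (Subtype.ext (by simp [coe_bracket_fst])) (by simp [bracket_snd])

variable {B}

theorem bracket_isAlt (hB : B.IsAlt) : (h.bracket B).IsAlt :=
  gradedBracket_isAlt (h.tensorRep V) (tensorForm_isAlt hB h.innerDer_comm)

theorem bracket_leibniz (hB : B.IsAlt) (hcyc : ∀ u v w, B u v • w + B v w • u + B w u • v = 0)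
    (a b c : inderSub k T tp × V ⊗[k] T) :
    h.bracket B a (h.bracket B b c) =
      h.bracket B (h.bracket B a b) c + h.bracket B b (h.bracket B a c) := by
  refine gradedBracket_leibniz (L := h.inder) (ρ := h.tensorRep V)
    (β := tensorForm B (innerDer tp)) (tensorForm_isAlt hB h.innerDer_comm) (fun D => ?_) ?_ a b c
  · exact tensorForm_lTensor_add (W := h.inder) B (innerDer tp)
      (φ := LieModule.toEnd k h.inder h.inder D) fun x y => Subtype.ext <| h.lie_tp D.2 x y
  · exact cyclic_sum_lTensor_tensorForm_eq_zero B (innerDer tp) hcyc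
      (τ := (inderSub k T tp).subtype) fun x y z => (h.swap₁₂ x y z).trans (h.swap₂₃ y x z)

end Bracket

end IsNullSTS

namespace IsSimpleNullSTS

variable {k T : Type*} [Field k] [AddCommGroup T] [Module k T] {tp : T →ₗ[k] T →ₗ[k] T →ₗ[k] T}

theorem eq_zero_of_forall_tp_eq_zero (hs : IsSimpleNullSTS k tp) {z : T}
    (hz : ∀ x y, tp x y z = 0) : z = 0 := by
  obtain ⟨⟨x₀, y₀, w₀, hne⟩, hideal⟩ := hs
  let N : Submodule k T := ⨅ x, ⨅ y, LinearMap.ker (tp x y)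
  have mem_N (w : T) : w ∈ N ↔ ∀ x y, tp x y w = 0 := by simp [N]
  rcases hideal N fun x y w hw => by simp [(mem_N w).1 hw x y] with hN | hN
  · rw [← Submodule.mem_bot k, ← hN, mem_N]
    exact hz
  · exact absurd ((mem_N w₀).1 (hN ▸ Submodule.mem_top) x₀ y₀) hne

end IsSimpleNullSTS

/-- A bilinear product is simple if it is nonzero and has no proper nonzero left ideal. For an
alternating product, such as a Lie bracket, left ideals are two-sided. -/
def IsSimpleBracket {k A : Type*} [CommRing k] [AddCommGroup A] [Module k A]
    (br : A →ₗ[k] A →ₗ[k] A) : Prop :=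
  (∃ a b, br a b ≠ 0) ∧ ∀ I : Submodule k A, (∀ a b, b ∈ I → br a b ∈ I) → I = ⊥ ∨ I = ⊤

section Ideals

variable {k V T : Type*} [Field k] [AddCommGroup V] [Module k V] [AddCommGroup T] [Module k T]
  {tp : T →ₗ[k] T →ₗ[k] T →ₗ[k] T} {B : V →ₗ[k] V →ₗ[k] k}

variable (tp B) in
/-- The ideal of `g(T)` associated with an ideal `J` of `T`: the elements `d + m` for which `d` maps
`T` into `J` and all contractions of `m` lie in `J`. -/
def gradedIdeal (J : Submodule k T) : Submodule k (inderSub k T tp × V ⊗[k] T) :=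
  ((Submodule.compatibleMaps ⊤ J).comap (inderSub k T tp).subtype).prod
    ((Submodule.compatibleMaps ⊤ J).comap (formContraction T B))

theorem mem_gradedIdeal {J : Submodule k T} {a : inderSub k T tp × V ⊗[k] T} :
    a ∈ gradedIdeal tp B J ↔
      (∀ x, (a.1 : T →ₗ[k] T) x ∈ J) ∧ ∀ u, formContraction T B a.2 u ∈ J := by
  simp [gradedIdeal, Submodule.compatibleMaps, SetLike.le_def]

/-- The slice `{x | v ⊗ x ∈ I}` of a subspace `I` of `g(T)` along a vector `v`, which turns ideals
of `g(T)` into ideals of `T`. -/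
def tensorSlice (I : Submodule k (inderSub k T tp × V ⊗[k] T)) (v : V) : Submodule k T :=
  I.comap (LinearMap.inr k _ _ ∘ₗ TensorProduct.mk k V T v)

theorem mem_tensorSlice {I : Submodule k (inderSub k T tp × V ⊗[k] T)} {v : V} {x : T} :
    x ∈ tensorSlice I v ↔ (0, v ⊗ₜ x) ∈ I :=
  Iff.rfl

namespace IsNullSTS

variable (h : IsNullSTS k tp)
include h

theorem coe_tensorForm_innerDer_apply_mem {J : Submodule k T}
    (hJ : ∀ x y z : T, z ∈ J → tp x y z ∈ J) {n : V ⊗[k] T}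
    (hn : ∀ u, formContraction T B n u ∈ J) (m : V ⊗[k] T) (z : T) :
    (tensorForm B (innerDer tp) m n : T →ₗ[k] T) z ∈ J := by
  induction m with
  | zero => simp
  | tmul u x =>
    rw [tensorForm_tmul_left, coe_innerDer, h.swap₂₃]
    exact hJ x z _ (hn u)
  | add m m' hm hm' => simpa using J.add_mem hm hm'

theorem bracket_mem_gradedIdeal {J : Submodule k T} (hJ : ∀ x y z : T, z ∈ J → tp x y z ∈ J)
    (a b : inderSub k T tp × V ⊗[k] T) (hb : b ∈ gradedIdeal tp B J) :
    h.bracket B a b ∈ gradedIdeal tp B J := by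
  have ha := inderSub_le_compatibleMaps hJ a.1.2
  obtain ⟨hb₁, hb₂⟩ := mem_gradedIdeal.1 hb
  refine mem_gradedIdeal.2 ⟨fun x => ?_, fun u => ?_⟩
  · rw [coe_bracket_fst]
    exact J.add_mem (J.sub_mem (ha (hb₁ x)) (hb₁ _))
      (h.coe_tensorForm_innerDer_apply_mem hJ hb₂ _ x)
  · rw [bracket_snd, map_sub, LinearMap.sub_apply, formContraction_lTensor,
      formContraction_lTensor]
    exact J.sub_mem (ha (hb₂ u)) (hb₁ _)

theorem bracket_eq_zero (h₀ : ∀ x y z, tp x y z = 0) : h.bracket B = 0 := by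
  have hD (D : inderSub k T tp) : (D : T →ₗ[k] T) = 0 := by
    simpa [inderSub_eq_bot h₀] using D.2
  refine LinearMap.ext₂ fun a b => Prod.ext (Subtype.ext ?_) ?_
  · rw [hD]
    rfl
  · simp [bracket_snd, hD]

theorem isSimpleNullSTS_of_isSimpleBracket (hne : B ≠ 0) (hs : IsSimpleBracket (h.bracket B)) :
    IsSimpleNullSTS k tp := by
  obtain ⟨⟨a, b, hab⟩, hideal⟩ := hs
  obtain ⟨u, v, huv⟩ : ∃ u v, B u v ≠ 0 := by
    simpa [LinearMap.ext_iff₂] using hne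
  refine ⟨?_, fun J hJ => ?_⟩
  · by_contra! h₀
    simp [h.bracket_eq_zero h₀] at hab
  · rcases hideal _ (h.bracket_mem_gradedIdeal (B := B) hJ) with hI | hI
    · refine Or.inl <| (Submodule.eq_bot_iff J).2 fun x hx => ?_
      have hvx : ((0, v ⊗ₜ x) : inderSub k T tp × V ⊗[k] T) ∈ gradedIdeal tp B J :=
        mem_gradedIdeal.2 ⟨by simp, fun w => by simpa using J.smul_mem _ hx⟩
      have hv : v ≠ 0 := by
        rintro rfl
        simp at huv
      exact right_eq_zero_of_tmul_eq_zero (k := k) hv (by simpa [hI] using hvx)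
    · refine Or.inr <| Submodule.eq_top_iff'.2 fun x => ?_
      have hvx : ((0, v ⊗ₜ x) : inderSub k T tp × V ⊗[k] T) ∈ gradedIdeal tp B J :=
        hI ▸ Submodule.mem_top
      have hux : B u v • x ∈ J := by simpa using (mem_gradedIdeal.1 hvx).2 u
      exact (J.smul_mem_iff huv).1 hux

section IdealsOfBracket

variable {I : Submodule k (inderSub k T tp × V ⊗[k] T)}
  (hI : ∀ a b, b ∈ I → h.bracket B a b ∈ I)
include hI

theorem tp_mem_tensorSlice (v : V) (x y z : T) (hz : z ∈ tensorSlice I v) :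
    tp x y z ∈ tensorSlice I v := by
  simpa [bracket_even_odd, mem_tensorSlice] using hI (innerDer tp x y, 0) _ (mem_tensorSlice.1 hz)

theorem innerDer_mem_of_tensorSlice_eq_top (hB : B.SeparatingRight) {v : V} (hv : v ≠ 0)
    (htop : tensorSlice I v = ⊤) (x y : T) : (innerDer tp x y, 0) ∈ I := by
  obtain ⟨u, huv⟩ : ∃ u, B u v ≠ 0 := by
    simpa using mt (hB v) hv
  have hy : (0, v ⊗ₜ y) ∈ I := mem_tensorSlice.1 (htop ▸ Submodule.mem_top)
  have hxy := hI (0, u ⊗ₜ x) _ hy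
  rw [bracket_odd_odd, tensorForm_tmul_tmul] at hxy
  exact (I.smul_mem_iff huv).1 (by simpa using hxy)

theorem eq_top_of_innerDer_mem (hs : IsSimpleNullSTS k tp)
    (hder : ∀ x y, (innerDer tp x y, 0) ∈ I) : I = ⊤ := by
  obtain ⟨⟨x, y, z, hne⟩, hideal⟩ := hs
  have tensorSlice_eq_top (v : V) : tensorSlice I v = ⊤ := by
    refine (hideal _ (h.tp_mem_tensorSlice hI v)).resolve_left fun hbot => hne ?_
    rw [← Submodule.mem_bot k, ← hbot, mem_tensorSlice, ← neg_mem_iff]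
    simpa [bracket_odd_even] using hI (0, v ⊗ₜ z) _ (hder x y)
  have odd_mem (m : V ⊗[k] T) : (0, m) ∈ I := by
    induction m with
    | zero => exact I.zero_mem
    | tmul v x => exact mem_tensorSlice.1 (tensorSlice_eq_top v ▸ Submodule.mem_top)
    | add m n hm hn => simpa using I.add_mem hm hn
  have even_le : inderSub k T tp ≤
      (I.comap (LinearMap.inl k _ _)).map (inderSub k T tp).subtype := by
    refine Submodule.span_le.2 ?_
    rintro _ ⟨x, y, rfl⟩
    exact ⟨_, hder x y, rfl⟩
  refine Submodule.eq_top_iff'.2 fun ⟨D, m⟩ => ?_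
  obtain ⟨E, hE, hED⟩ := even_le D.2
  obtain rfl : E = D := Subtype.ext hED
  simpa using I.add_mem hE (odd_mem m)

/-- Bracketing `a = d + m` twice with pure tensors over the same vector `u` kills the `d`-part,
because `⟨u|u⟩ = 0`, and leaves a pure tensor. -/
theorem tp_formContraction_mem_tensorSlice (hB : B.IsAlt) {a : inderSub k T tp × V ⊗[k] T}
    (ha : a ∈ I) (u : V) (x y : T) : tp x y (formContraction T B a.2 u) ∈ tensorSlice I u := by
  have hyxa := hI (0, u ⊗ₜ y) _ (hI (0, u ⊗ₜ x) a ha)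
  have hbr : h.bracket B (0, u ⊗ₜ y) (h.bracket B (0, u ⊗ₜ x) a) =
      -(0, u ⊗ₜ tp x y (formContraction T B a.2 u)) := by
    rw [h.swap₂₃]
    refine Prod.ext (Subtype.ext ?_) ?_ <;>
      simp [coe_bracket_fst, bracket_snd, tensorForm_tmul_left, hB u]
  rwa [hbr, neg_mem_iff] at hyxa

theorem eq_bot_of_tensorSlice_eq_bot [FiniteDimensional k V] [Nontrivial V] (hB : B.IsAlt)
    (hsep : B.SeparatingRight) (hs : IsSimpleNullSTS k tp) (hbot : ∀ v ≠ 0, tensorSlice I v = ⊥) :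
    I = ⊥ := by
  have eq_zero_of_mem {v : V} (hv : v ≠ 0) {x : T} (hx : x ∈ tensorSlice I v) : x = 0 := by
    simpa [hbot v hv] using hx
  refine (Submodule.eq_bot_iff I).2 fun ⟨D, m⟩ ha => ?_
  obtain rfl : m = 0 := by
    refine formContraction_injective hsep (LinearMap.ext fun u => ?_)
    rw [map_zero, LinearMap.zero_apply]
    by_cases hu : u = 0
    · rw [hu, map_zero]
    · exact hs.eq_zero_of_forall_tp_eq_zero fun x y =>
        eq_zero_of_mem hu (h.tp_formContraction_mem_tensorSlice hI hB ha u x y)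
  obtain ⟨v, hv⟩ := exists_ne (0 : V)
  have hD (x : T) : (D : T →ₗ[k] T) x = 0 := by
    refine eq_zero_of_mem hv ?_
    rw [mem_tensorSlice, ← neg_mem_iff]
    simpa [bracket_odd_even] using hI (0, v ⊗ₜ x) _ ha
  exact Prod.ext (Subtype.ext <| LinearMap.ext hD) rfl

end IdealsOfBracket

theorem isSimpleBracket_of_isSimpleNullSTS [FiniteDimensional k V] [Nontrivial V] (hB : B.IsAlt)
    (hsep : B.SeparatingRight) (hs : IsSimpleNullSTS k tp) : IsSimpleBracket (h.bracket B) := by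
  refine ⟨?_, fun I hI => ?_⟩
  · obtain ⟨⟨x, y, z, hne⟩, -⟩ := hs
    obtain ⟨v, hv⟩ := exists_ne (0 : V)
    refine ⟨(innerDer tp x y, 0), (0, v ⊗ₜ z), ?_⟩
    simpa [bracket_even_odd] using mt (right_eq_zero_of_tmul_eq_zero hv) hne
  · by_cases! hbot : ∀ v ≠ 0, tensorSlice I v = ⊥
    · exact Or.inl <| h.eq_bot_of_tensorSlice_eq_bot hI hB hsep hs hbot
    · obtain ⟨v, hv, hne⟩ := hbot
      have htop := (hs.2 _ (h.tp_mem_tensorSlice hI v)).resolve_left hne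
      exact Or.inr <| h.eq_top_of_innerDer_mem hI hs
        (h.innerDer_mem_of_tensorSlice_eq_top hI hsep hv htop)

end IsNullSTS

end Ideals

theorem nullSTS_gT_Lie_and_simple_general (k V T : Type*) [Field k]
    [AddCommGroup V] [Module k V] [AddCommGroup T] [Module k T]
    (hV : Module.finrank k V = 2)
    (Bv : V →ₗ[k] V →ₗ[k] k) (hValt : ∀ v : V, Bv v v = 0) (hVne : Bv ≠ 0)
    (tp : T →ₗ[k] T →ₗ[k] T →ₗ[k] T) (hnsts : IsNullSTS k tp) :
    ∃ br : (↥(inderSub k T tp) × (V ⊗[k] T)) →ₗ[k]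
        (↥(inderSub k T tp) × (V ⊗[k] T)) →ₗ[k] (↥(inderSub k T tp) × (V ⊗[k] T)),
      (∀ a, br a a = 0) ∧
      (∀ a b c, br a (br b c) = br (br a b) c + br b (br a c)) ∧
      (∀ d d' : ↥(inderSub k T tp),
        ((br (d, 0) (d', 0)).1 : T →ₗ[k] T) =
            (d : T →ₗ[k] T) ∘ₗ (d' : T →ₗ[k] T) - (d' : T →ₗ[k] T) ∘ₗ (d : T →ₗ[k] T) ∧
          (br (d, 0) (d', 0)).2 = 0) ∧
      (∀ (d : ↥(inderSub k T tp)) (v : V) (x : T),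
        br (d, 0) (0, v ⊗ₜ[k] x) = (0, v ⊗ₜ[k] ((d : T →ₗ[k] T) x))) ∧
      (∀ (u v : V) (x y : T),
        ((br (0, u ⊗ₜ[k] x) (0, v ⊗ₜ[k] y)).1 : T →ₗ[k] T) = Bv u v • tp x y ∧
          (br (0, u ⊗ₜ[k] x) (0, v ⊗ₜ[k] y)).2 = 0) ∧
      (((∃ a b, br a b ≠ 0) ∧
          ∀ I : Submodule k (↥(inderSub k T tp) × (V ⊗[k] T)),
            (∀ a b, b ∈ I → br a b ∈ I) → I = ⊥ ∨ I = ⊤) ↔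
        IsSimpleNullSTS k tp) := by
  have : FiniteDimensional k V := Module.finite_of_finrank_eq_succ hV
  have : Nontrivial V := Module.nontrivial_of_finrank_eq_succ hV
  have hcyc := cyclic_sum_smul_eq_zero hV hValt
  have hsep := separatingRight_of_cyclic_sum_smul_eq_zero hValt hVne hcyc
  refine ⟨hnsts.bracket Bv, hnsts.bracket_isAlt hValt, hnsts.bracket_leibniz hValt hcyc,
    fun d d' => ?_, fun d v x => ?_, fun u v x y => ?_,
    hnsts.isSimpleNullSTS_of_isSimpleBracket hVne,
    hnsts.isSimpleBracket_of_isSimpleNullSTS hValt hsep⟩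
  · simp [IsNullSTS.coe_bracket_fst, IsNullSTS.bracket_snd]
  · simp [IsNullSTS.bracket_even_odd]
  · simp [IsNullSTS.bracket_odd_odd]

/-- For a null symplectic triple system `T` over a field of
characteristic `≠ 2` and a two-dimensional space `V` with a nonzero alternating form
`⟨·|·⟩`, the space `g(T) = inder(T) ⊕ (V ⊗ T)`, with the bracket which is the commutator
on `inder(T)`, the natural action `[d, v⊗x] = v ⊗ d(x)`, and
`[u⊗x, v⊗y] = ⟨u|v⟩ d_{x,y}`, is a Lie algebra; moreover it is simple if and only if `T`
is a simple null symplectic triple system. -/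
theorem nullSTS_gT_Lie_and_simple (k V T : Type*) [Field k]
    [AddCommGroup V] [Module k V] [AddCommGroup T] [Module k T]
    [FiniteDimensional k V] [FiniteDimensional k T]
    (hchar : ringChar k ≠ 2) (hV : Module.finrank k V = 2)
    (Bv : V →ₗ[k] V →ₗ[k] k) (hValt : ∀ v : V, Bv v v = 0) (hVne : Bv ≠ 0)
    (tp : T →ₗ[k] T →ₗ[k] T →ₗ[k] T) (hnsts : IsNullSTS k tp) :
    ∃ br : (↥(inderSub k T tp) × (V ⊗[k] T)) →ₗ[k]
        (↥(inderSub k T tp) × (V ⊗[k] T)) →ₗ[k] (↥(inderSub k T tp) × (V ⊗[k] T)),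
      -- the bracket is alternating
      (∀ a, br a a = 0) ∧
      -- the bracket satisfies the Jacobi identity (in Leibniz form)
      (∀ a b c, br a (br b c) = br (br a b) c + br b (br a c)) ∧
      -- on inder(T) the bracket is the commutator
      (∀ d d' : ↥(inderSub k T tp),
        ((br (d, 0) (d', 0)).1 : T →ₗ[k] T) =
            (d : T →ₗ[k] T) ∘ₗ (d' : T →ₗ[k] T) - (d' : T →ₗ[k] T) ∘ₗ (d : T →ₗ[k] T) ∧
          (br (d, 0) (d', 0)).2 = 0) ∧
      -- inder(T) acts on the second slot of V ⊗ T
      (∀ (d : ↥(inderSub k T tp)) (v : V) (x : T),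
        br (d, 0) (0, v ⊗ₜ[k] x) = (0, v ⊗ₜ[k] ((d : T →ₗ[k] T) x))) ∧
      -- [u⊗x, v⊗y] = ⟨u|v⟩ d_{x,y}
      (∀ (u v : V) (x y : T),
        ((br (0, u ⊗ₜ[k] x) (0, v ⊗ₜ[k] y)).1 : T →ₗ[k] T) = Bv u v • tp x y ∧
          (br (0, u ⊗ₜ[k] x) (0, v ⊗ₜ[k] y)).2 = 0) ∧
      -- g(T) is simple iff T is simple
      (((∃ a b, br a b ≠ 0) ∧
          ∀ I : Submodule k (↥(inderSub k T tp) × (V ⊗[k] T)),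
            (∀ a b, b ∈ I → br a b ∈ I) → I = ⊥ ∨ I = ⊤) ↔
        IsSimpleNullSTS k tp) := by
  exact nullSTS_gT_Lie_and_simple_general k V T hV Bv hValt hVne tp hnsts
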